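/- arXiv:1008.3252 — 3 statements merged into one kernel-verified Lean document; each statement's English description precedes it below -/
import Mathlib

section
/- Let ã : ℝ³₊̄ → ℝ³ be of class C² up to the boundary, divergence free (∂₁ã₁ + ∂₂ã₂ + ∂₃ã₃ = 0 on ℝ³₊̄), and satisfy the slip boundary conditions in the explicit form ã₃(x₁,x₂,0) = 0 and ∂₃ã_j(x₁,x₂,0) = ∂_jã₃(x₁,x₂,0) for j = 1,2. Then on Γ one has ∂₃ã₁(x₁,x₂,0) = ∂₃ã₂(x₁,x₂,0) = 0 and ∂₃²ã₃(x₁,x₂,0) = 0 for all (x₁,x₂) ∈ ℝ². (Hence no compatibility conditions are required for derivatives of order at most two.) -/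
/-!
Since `a₃` vanishes identically on the plane `Γ = {x₃ = 0}`, so do its tangential derivatives, and the
slip condition `∂₃aⱼ = ∂ⱼa₃` gives `∂₃aⱼ = 0` on `Γ` for the two tangential components. The latter is
again an identity along `Γ`, so `∂ⱼ∂₃aⱼ = 0` there. As `div a` is `C¹` and vanishes for `x₃ ≥ 0`, its
normal derivative vanishes on `Γ`; by symmetry of second derivatives this reads
`∂₁∂₃a₁ + ∂₂∂₃a₂ + ∂₃²a₃ = 0`, and only the last term is left.

Both kinds of differentiation, tangential along `Γ` and one-sided in the normal direction, are covered
by `pd_eq_zero_of_ray`.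
-/


noncomputable section

open Filter Set

/-- The reflection `x ↦ (x₁, x₂, −x₃)` of a point of `ℝ³`. -/
def refl3 (x : Fin 3 → ℝ) : Fin 3 → ℝ := ![x 0, x 1, -(x 2)]

/-- The operator `𝒯` acting on scalar fields: `(𝒯p)(x) = p(x̄)`. -/
def Tscal (p : (Fin 3 → ℝ) → ℝ) : (Fin 3 → ℝ) → ℝ := fun x => p (refl3 x)

/-- The operator `𝒯` acting on vector fields:
`(𝒯v)(x) = (v₁(x̄), v₂(x̄), −v₃(x̄))`. -/
def Tvec (v : (Fin 3 → ℝ) → (Fin 3 → ℝ)) : (Fin 3 → ℝ) → (Fin 3 → ℝ) :=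
  fun x => ![v (refl3 x) 0, v (refl3 x) 1, -(v (refl3 x) 2)]

/-- Partial derivative in the `i`-th coordinate direction. -/
def pd (i : Fin 3) (f : (Fin 3 → ℝ) → ℝ) : (Fin 3 → ℝ) → ℝ :=
  fun x => fderiv ℝ f x (Pi.single i 1)

/-- Divergence `∇·v = ∂₁v₁ + ∂₂v₂ + ∂₃v₃`. -/
def div3 (v : (Fin 3 → ℝ) → (Fin 3 → ℝ)) : (Fin 3 → ℝ) → ℝ :=
  fun x => pd 0 (fun y => v y 0) x + pd 1 (fun y => v y 1) x + pd 2 (fun y => v y 2) x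

/-- Curl `∇×v = (∂₂v₃−∂₃v₂, ∂₃v₁−∂₁v₃, ∂₁v₂−∂₂v₁)`. -/
def curl3 (v : (Fin 3 → ℝ) → (Fin 3 → ℝ)) : (Fin 3 → ℝ) → (Fin 3 → ℝ) :=
  fun x => ![pd 1 (fun y => v y 2) x - pd 2 (fun y => v y 1) x,
             pd 2 (fun y => v y 0) x - pd 0 (fun y => v y 2) x,
             pd 0 (fun y => v y 1) x - pd 1 (fun y => v y 0) x]

/-- Scalar Laplacian `Δf = ∂₁²f + ∂₂²f + ∂₃²f`. -/
def lap3 (f : (Fin 3 → ℝ) → ℝ) : (Fin 3 → ℝ) → ℝ :=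
  fun x => pd 0 (pd 0 f) x + pd 1 (pd 1 f) x + pd 2 (pd 2 f) x

/-- `j`-th component of the convective term `(v·∇)v`. -/
def conv3 (v : (Fin 3 → ℝ) → (Fin 3 → ℝ)) (j : Fin 3) : (Fin 3 → ℝ) → ℝ :=
  fun x => ∑ i : Fin 3, v x i * pd i (fun y => v y j) x

/-- Iterated normal derivative `∂₃^k`. -/
def pd3pow (k : ℕ) (f : (Fin 3 → ℝ) → ℝ) : (Fin 3 → ℝ) → ℝ := (pd 2)^[k] f

/-- Multi-index partial derivative `∂^α = ∂₁^{α₀} ∂₂^{α₁} ∂₃^{α₂}`. -/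
def pdMulti (α : Fin 3 → ℕ) (f : (Fin 3 → ℝ) → ℝ) : (Fin 3 → ℝ) → ℝ :=
  (pd 0)^[α 0] ((pd 1)^[α 1] ((pd 2)^[α 2] f))

/-- Mirror extension `𝒯̃ã` of a field on the (closed) upper half-space:
it equals `ã` for `x₃ ≥ 0` and `𝒯ã` for `x₃ < 0`. -/
def mirrorExt (a : (Fin 3 → ℝ) → (Fin 3 → ℝ)) : (Fin 3 → ℝ) → (Fin 3 → ℝ) :=
  fun x => if 0 ≤ x 2 then a x else Tvec a x

/-- Symmetric gradient `(𝒟u)_{ij} = (∂ᵢu_j + ∂_ju_i)/2`. -/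
def Dsym (u : (Fin 3 → ℝ) → (Fin 3 → ℝ)) (x : Fin 3 → ℝ) : Matrix (Fin 3) (Fin 3) ℝ :=
  fun i j => (pd i (fun y => u y j) x + pd j (fun y => u y i) x) / 2

/-- Frobenius norm of a `3×3` matrix. -/
def frob (D : Matrix (Fin 3) (Fin 3) ℝ) : ℝ :=
  Real.sqrt (∑ i : Fin 3, ∑ j : Fin 3, (D i j) ^ 2)

/-- A one-sided ray suffices, so this also differentiates, at boundary points in the normal direction,
an identity that holds only on the closed half-space. -/
theorem pd_eq_zero_of_ray {g : (Fin 3 → ℝ) → ℝ} {p : Fin 3 → ℝ} {i : Fin 3}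
    (hg : DifferentiableAt ℝ g p)
    (h0 : ∀ t : ℝ, 0 ≤ t → g (p + t • Pi.single i 1) = 0) : pd i g p = 0 := by
  have hline : HasDerivAt (fun t : ℝ => p + t • (Pi.single i 1 : Fin 3 → ℝ)) (Pi.single i 1) 0 := by
    simpa using ((hasDerivAt_id (0 : ℝ)).smul_const (Pi.single i 1 : Fin 3 → ℝ)).const_add p
  have hp : p + (0 : ℝ) • (Pi.single i 1 : Fin 3 → ℝ) = p := by simp
  have hg' : HasFDerivAt g (fderiv ℝ g p) (p + (0 : ℝ) • (Pi.single i 1 : Fin 3 → ℝ)) := by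
    rw [hp]; exact hg.hasFDerivAt
  have h1 : HasDerivWithinAt (fun t : ℝ => g (p + t • (Pi.single i 1 : Fin 3 → ℝ)))
      (pd i g p) (Ici 0) 0 := (hg'.comp_hasDerivAt (0 : ℝ) hline).hasDerivWithinAt
  have h2 : HasDerivWithinAt (fun t : ℝ => g (p + t • (Pi.single i 1 : Fin 3 → ℝ)))
      0 (Ici 0) 0 :=
    (hasDerivWithinAt_const (0 : ℝ) (Ici 0) (0 : ℝ)).congr (fun t ht => h0 t ht) (h0 0 le_rfl)
  exact (uniqueDiffWithinAt_Ici (0 : ℝ)).eq_deriv _ h1 h2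

theorem differentiable_pd {f : (Fin 3 → ℝ) → ℝ} (hf : ContDiff ℝ 2 f) (i : Fin 3) :
    Differentiable ℝ (pd i f) :=
  ((hf.fderiv_right (m := 1) (by norm_num)).clm_apply contDiff_const).differentiable (by norm_num)

theorem pd_comm {f : (Fin 3 → ℝ) → ℝ} (hf : ContDiff ℝ 2 f) (i j : Fin 3) (x : Fin 3 → ℝ) :
    pd i (pd j f) x = pd j (pd i f) x := by
  have hd : DifferentiableAt ℝ (fderiv ℝ f) x :=
    (hf.fderiv_right (m := 1) (by norm_num)).differentiable (by norm_num) x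
  have key : ∀ k l : Fin 3, pd k (pd l f) x
      = fderiv ℝ (fderiv ℝ f) x (Pi.single k 1) (Pi.single l 1) := by
    intro k l
    have := (hd.hasFDerivAt.clm_apply
      (hasFDerivAt_const (Pi.single l 1 : Fin 3 → ℝ) x)).fderiv
    unfold pd
    rw [this]
    simp
  rw [key, key]
  exact (hf.contDiffAt.isSymmSndFDerivAt (by simp)) _ _

theorem pd_tangential_eq_zero {g : (Fin 3 → ℝ) → ℝ} (hg : Differentiable ℝ g)
    (h0 : ∀ x₁ x₂ : ℝ, g ![x₁, x₂, 0] = 0) (j : Fin 2) (x₁ x₂ : ℝ) :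
    pd j.castSucc g ![x₁, x₂, 0] = 0 := by
  refine pd_eq_zero_of_ray (hg _) fun t _ => ?_
  fin_cases j
  · convert h0 (x₁ + t) x₂ using 2
    ext k; fin_cases k <;> simp
  · convert h0 x₁ (x₂ + t) using 2
    ext k; fin_cases k <;> simp

/-- if `ã` is `C²` up to the boundary, divergence free on the closed
half-space, and satisfies the slip conditions `ã₃ = 0`, `∂₃ã_j = ∂_jã₃` (`j = 1,2`)
on `Γ`, then `∂₃ã₁ = ∂₃ã₂ = 0` and `∂₃²ã₃ = 0` on `Γ`; so no compatibility
conditions are required for derivatives of order at most two. -/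
theorem no_compatibility_up_to_order_two (a : (Fin 3 → ℝ) → (Fin 3 → ℝ))
    (ha : ContDiff ℝ 2 a)
    (hdiv : ∀ x : Fin 3 → ℝ, 0 ≤ x 2 → div3 a x = 0)
    (hbc1 : ∀ x₁ x₂ : ℝ, a ![x₁, x₂, 0] 2 = 0)
    (hbc2 : ∀ x₁ x₂ : ℝ, ∀ j : Fin 2,
      pd 2 (fun y => a y j.castSucc) ![x₁, x₂, 0]
        = pd j.castSucc (fun y => a y 2) ![x₁, x₂, 0]) :
    ∀ x₁ x₂ : ℝ,
      pd 2 (fun y => a y 0) ![x₁, x₂, 0] = 0 ∧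
      pd 2 (fun y => a y 1) ![x₁, x₂, 0] = 0 ∧
      pd 2 (pd 2 (fun y => a y 2)) ![x₁, x₂, 0] = 0 := by
  have hc : ∀ k : Fin 3, ContDiff ℝ 2 (fun y => a y k) := fun k => contDiff_pi.1 ha k
  have hn : ∀ (j : Fin 2) (x₁ x₂ : ℝ), pd 2 (fun y => a y j.castSucc) ![x₁, x₂, 0] = 0 := by
    intro j x₁ x₂
    rw [hbc2 x₁ x₂ j]
    exact pd_tangential_eq_zero ((hc 2).differentiable (by norm_num)) hbc1 j x₁ x₂
  intro x₁ x₂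
  refine ⟨hn 0 x₁ x₂, hn 1 x₁ x₂, ?_⟩
  have hmix : ∀ j : Fin 2,
      pd 2 (pd j.castSucc (fun y => a y j.castSucc)) ![x₁, x₂, 0] = 0 := by
    intro j
    rw [pd_comm (hc _)]
    exact pd_tangential_eq_zero (differentiable_pd (hc _) 2) (hn j) j x₁ x₂
  have d0 := differentiable_pd (hc 0) 0 ![x₁, x₂, 0]
  have d1 := differentiable_pd (hc 1) 1 ![x₁, x₂, 0]
  have d2 := differentiable_pd (hc 2) 2 ![x₁, x₂, 0]
  have hdn : pd 2 (div3 a) ![x₁, x₂, 0] = 0 := by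
    refine pd_eq_zero_of_ray ((d0.add d1).add d2) fun t ht => hdiv _ ?_
    simpa using ht
  have hsum : pd 2 (div3 a) ![x₁, x₂, 0]
      = pd 2 (pd 0 (fun y => a y 0)) ![x₁, x₂, 0] + pd 2 (pd 1 (fun y => a y 1)) ![x₁, x₂, 0]
        + pd 2 (pd 2 (fun y => a y 2)) ![x₁, x₂, 0] := by
    have := ((d0.hasFDerivAt.add d1.hasFDerivAt).add d2.hasFDerivAt).fderiv
    exact congrArg (fun L : (Fin 3 → ℝ) →L[ℝ] ℝ => L (Pi.single 2 1)) this
  have m0 : pd 2 (pd 0 (fun y => a y 0)) ![x₁, x₂, 0] = 0 := hmix 0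
  have m1 : pd 2 (pd 1 (fun y => a y 1)) ![x₁, x₂, 0] = 0 := hmix 1
  linarith
end
end

section
/- Let n ≥ 2 be an integer, let ρ : ℝ³ → ℝ be smooth with compact support, let w(x) = x₃^{n+1}·(1,1,0), and let v = ∇×(ρw). Then for all (x₁,x₂) ∈ ℝ², ∂₃^n v(x₁,x₂,0) = (n+1)!·ρ(x₁,x₂,0)·(−1,1,0). In particular, at points where ρ does not vanish on Γ, ∂₃^n v₁ and ∂₃^n v₂ do not vanish on Γ; hence for odd n the compatibility condition of order n is independent of the compatibility conditions of all lower odd orders together with the slip boundary conditions and the divergence-free constraint. -/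
/-!
Both nonzero components of `ρw` equal `ρ x₃^{n+1}`, so by the product rule every component of
`v = ∇×(ρw)` has the form `g · x₃^n` with `g` smooth: `g = ∓(∂₃ρ · x₃ + (n+1)ρ)` for the first two
components, and `g = (∂₁ρ − ∂₂ρ) · x₃` for the third. The lemma `pd3pow_mul_pow` says that
`∂₃^n (g · x₃^n) = n! g` on `Γ`, and there `g = ∓(n+1)ρ`, respectively `g = 0`.
-/

noncomputable section

open Filter Set

lemma contDiff_pd (i : Fin 3) {g : (Fin 3 → ℝ) → ℝ} (hg : ContDiff ℝ (⊤ : ℕ∞) g) :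
    ContDiff ℝ (⊤ : ℕ∞) (pd i g) :=
  (hg.fderiv_right (m := (⊤ : ℕ∞)) (by exact_mod_cast le_rfl)).clm_apply contDiff_const

/-- Product rule for `∂ᵢ(g · x₃^m)`. -/
lemma pd_mul_pow (i : Fin 3) {g : (Fin 3 → ℝ) → ℝ} (hg : ContDiff ℝ (⊤ : ℕ∞) g) (m : ℕ)
    (x : Fin 3 → ℝ) :
    pd i (fun y => g y * y 2 ^ m) x
      = pd i g x * x 2 ^ m + g x * (m * x 2 ^ (m - 1) * (Pi.single i 1 : Fin 3 → ℝ) 2) := by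
  have h1 : HasFDerivAt g (fderiv ℝ g x) x := (hg.differentiable (by simp) x).hasFDerivAt
  have h2 : HasFDerivAt (fun y : Fin 3 → ℝ => y 2)
      (ContinuousLinearMap.proj (R := ℝ) (φ := fun _ : Fin 3 => ℝ) 2) x :=
    (ContinuousLinearMap.proj (R := ℝ) (φ := fun _ : Fin 3 => ℝ) 2).hasFDerivAt
  have h3 := h1.mul (h2.pow m)
  unfold pd
  rw [show (fun y => g y * y 2 ^ m) = g * (fun y : Fin 3 → ℝ => y 2 ^ m) from rfl]
  rw [h3.fderiv]
  simp
  ring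

lemma pd_two_mul_pow_succ {g : (Fin 3 → ℝ) → ℝ} (hg : ContDiff ℝ (⊤ : ℕ∞) g) (m : ℕ) :
    pd 2 (fun y => g y * y 2 ^ (m + 1))
      = fun y => (pd 2 g y * y 2 + (m + 1) * g y) * y 2 ^ m := by
  funext x
  rw [pd_mul_pow 2 hg]
  simp
  ring

/-- On `Γ`, only the term where all `k` normal derivatives fall on `x₃^k` survives. -/
lemma pd3pow_mul_pow (k : ℕ) {g : (Fin 3 → ℝ) → ℝ} (hg : ContDiff ℝ (⊤ : ℕ∞) g)
    {x : Fin 3 → ℝ} (hx : x 2 = 0) :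
    pd3pow k (fun y => g y * y 2 ^ k) x = (k.factorial : ℝ) * g x := by
  induction k generalizing g with
  | zero => simp [pd3pow]
  | succ k ih =>
    have hg' : ContDiff ℝ (⊤ : ℕ∞) (fun y => pd 2 g y * y 2 + ((k : ℝ) + 1) * g y) :=
      ((contDiff_pd 2 hg).mul (contDiff_apply ℝ ℝ 2)).add (contDiff_const.mul hg)
    have := ih hg'
    unfold pd3pow at this ⊢
    rw [Function.iterate_succ_apply, pd_two_mul_pow_succ hg, this, hx, Nat.factorial_succ]
    push_cast
    ring

/-- for `n ≥ 2`, `ρ` smooth with compact support,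
`w(x) = x₃^{n+1}(1,1,0)` and `v = ∇×(ρw)`, one has on `Γ`
`∂₃^n v(x₁,x₂,0) = (n+1)!·ρ(x₁,x₂,0)·(−1,1,0)`; in particular where `ρ ≠ 0` on `Γ`
the derivatives `∂₃^n v₁` and `∂₃^n v₂` do not vanish. -/
theorem independence_example_nonvanishing (n : ℕ) (hn : 2 ≤ n)
    (ρ : (Fin 3 → ℝ) → ℝ) (hρ : ContDiff ℝ (⊤ : ℕ∞) ρ) (hρc : HasCompactSupport ρ)
    (v : (Fin 3 → ℝ) → (Fin 3 → ℝ))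
    (hv : v = curl3 (fun x => fun i => ρ x * (x 2 ^ (n + 1) * ![(1 : ℝ), 1, 0] i))) :
    ∀ x₁ x₂ : ℝ,
      (∀ j : Fin 3, pd3pow n (fun y => v y j) ![x₁, x₂, 0]
        = (Nat.factorial (n + 1) : ℝ) * ρ ![x₁, x₂, 0] * ![(-1 : ℝ), 1, 0] j) ∧
      (ρ ![x₁, x₂, 0] ≠ 0 →
        pd3pow n (fun y => v y 0) ![x₁, x₂, 0] ≠ 0 ∧
        pd3pow n (fun y => v y 1) ![x₁, x₂, 0] ≠ 0) := by
  intro x₁ x₂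
  have hx : (![x₁, x₂, 0] : Fin 3 → ℝ) 2 = 0 := rfl
  have hz : ∀ i : Fin 3, pd i (fun _ => (0 : ℝ)) = 0 := by
    intro i; funext x; simp [pd]
  have hA : ContDiff ℝ (⊤ : ℕ∞) (fun y => pd 2 ρ y * y 2 + ((n : ℝ) + 1) * ρ y) :=
    ((contDiff_pd 2 hρ).mul (contDiff_apply ℝ ℝ 2)).add (contDiff_const.mul hρ)
  have h0 : (fun y => v y 0)
      = fun y => (-(pd 2 ρ y * y 2 + ((n : ℝ) + 1) * ρ y)) * y 2 ^ n := by
    funext y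
    simp [hv, curl3, hz, pd_two_mul_pow_succ hρ]
    ring
  have h1 : (fun y => v y 1)
      = fun y => (pd 2 ρ y * y 2 + ((n : ℝ) + 1) * ρ y) * y 2 ^ n := by
    funext y
    simp [hv, curl3, hz, pd_two_mul_pow_succ hρ]
  have h2 : (fun y => v y 2)
      = fun y => ((pd 0 ρ y - pd 1 ρ y) * y 2) * y 2 ^ n := by
    funext y
    simp [hv, curl3, pd_mul_pow _ hρ]
    ring
  have key : ∀ j : Fin 3, pd3pow n (fun y => v y j) ![x₁, x₂, 0]
      = (Nat.factorial (n + 1) : ℝ) * ρ ![x₁, x₂, 0] * ![(-1 : ℝ), 1, 0] j := by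
    intro j
    fin_cases j
    · change pd3pow n (fun y => v y 0) _ = _
      rw [h0, pd3pow_mul_pow n hA.neg hx, hx, Nat.factorial_succ]
      push_cast
      simp
      ring
    · change pd3pow n (fun y => v y 1) _ = _
      rw [h1, pd3pow_mul_pow n hA hx, hx, Nat.factorial_succ]
      push_cast
      simp
      ring
    · change pd3pow n (fun y => v y 2) _ = _
      rw [h2, pd3pow_mul_pow n
        (((contDiff_pd 0 hρ).sub (contDiff_pd 1 hρ)).mul (contDiff_apply ℝ ℝ 2)) hx, hx]
      simp
  refine ⟨key, fun h => ?_⟩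
  have hf : (Nat.factorial (n + 1) : ℝ) ≠ 0 := by exact_mod_cast Nat.factorial_ne_zero _
  rw [key 0, key 1]
  simp [h, hf]
end
end

section
/- Let ν₀, ν₁ > 0 and p > 2, and set S(D) = (ν₀ + ν₁|D|^{p−2})D for a symmetric 3×3 matrix D, with |·| the Frobenius norm. Let u : ℝ³ → ℝ³ and π : ℝ³ → ℝ be such that u is twice differentiable, π is differentiable, the map x ↦ S(𝒟u(x)) is differentiable, and (u,π) satisfies pointwise the stationary non-Newtonian system −∇·S(𝒟u) + ∇π = f, ∇·u = 0 on ℝ³. Then (𝒯u, 𝒯π) satisfies pointwise the same system with force 𝒯f: −∇·S(𝒟(𝒯u)) + ∇(𝒯π) = 𝒯f and ∇·(𝒯u) = 0 on ℝ³. -/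
/-!
The reflection `R = diag(1, 1, -1)` is an orthogonal change of variables, and the power-law stress
`S` is isotropic. With `ε = (1, 1, -1)` one has `(𝒯u)ᵢ = εᵢ · (uᵢ ∘ R)` and, by the chain rule
(`pd_mul_comp_refl3`), `∂ᵢ(g ∘ R) = εᵢ · (∂ᵢg ∘ R)`. Hence `𝒟(𝒯u)ᵢⱼ = εᵢεⱼ · (𝒟u)ᵢⱼ ∘ R`
(`Dsym_Tvec`). Since `εᵢ² = 1`, this conjugation preserves the Frobenius norm
(`frob_sign_conj`), so that `S(𝒟(𝒯u))ᵢⱼ = εᵢεⱼ · S(𝒟u)ᵢⱼ ∘ R`. Taking the divergence produces another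
factor `εᵢ`, so both sides of the `j`-th momentum equation are `εⱼ` times the original ones at `R x`,
while the divergence of `𝒯u` is that of `u` at `R x`.
-/


noncomputable section

open Filter Set

/-- The diagonal `(1, 1, -1)` of the reflection matrix. -/
def reflSign : Fin 3 → ℝ := ![1, 1, -1]

lemma reflSign_sq (i : Fin 3) : reflSign i * reflSign i = 1 := by
  fin_cases i <;> simp [reflSign]

lemma refl3_apply (x : Fin 3 → ℝ) (i : Fin 3) : refl3 x i = reflSign i * x i := by
  fin_cases i <;> simp [refl3, reflSign]

lemma Tvec_apply (v : (Fin 3 → ℝ) → (Fin 3 → ℝ)) (x : Fin 3 → ℝ) (i : Fin 3) :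
    Tvec v x i = reflSign i * v (refl3 x) i := by
  fin_cases i <;> simp [Tvec, reflSign]

/-- `refl3` as a continuous linear map. -/
def refl3L : (Fin 3 → ℝ) →L[ℝ] (Fin 3 → ℝ) :=
  ContinuousLinearMap.pi fun i => reflSign i • ContinuousLinearMap.proj i

lemma refl3L_apply (x : Fin 3 → ℝ) : refl3L x = refl3 x := by
  ext i
  simp [refl3L, refl3_apply]

lemma refl3_single (i : Fin 3) :
    refl3 (Pi.single i 1) = reflSign i • (Pi.single i 1 : Fin 3 → ℝ) := by
  ext j
  rw [refl3_apply, Pi.smul_apply, smul_eq_mul]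
  by_cases h : j = i
  · subst h; rfl
  · simp [Pi.single_eq_of_ne h]

/-- Chain rule for a constant multiple of a function precomposed with the reflection. -/
lemma pd_mul_comp_refl3 (g : (Fin 3 → ℝ) → ℝ) (hg : Differentiable ℝ g) (c : ℝ) (i : Fin 3)
    (x : Fin 3 → ℝ) :
    pd i (fun y => c * g (refl3 y)) x = c * (reflSign i * pd i g (refl3 x)) := by
  have hR : HasFDerivAt refl3 refl3L x := by
    have h := refl3L.hasFDerivAt (x := x)
    rwa [show (refl3L : (Fin 3 → ℝ) → (Fin 3 → ℝ)) = refl3 from funext refl3L_apply] at h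
  have h := (((hg (refl3 x)).hasFDerivAt).comp x hR).const_mul c
  have h' : HasFDerivAt (fun y => c * g (refl3 y)) _ x := h
  simp only [pd, h'.fderiv]
  simp [refl3L_apply, refl3_single]

lemma pd_Tvec (u : (Fin 3 → ℝ) → (Fin 3 → ℝ)) (hu : Differentiable ℝ u) (i j : Fin 3)
    (x : Fin 3 → ℝ) :
    pd i (fun y => Tvec u y j) x
      = reflSign j * (reflSign i * pd i (fun y => u y j) (refl3 x)) := by
  simp only [Tvec_apply]
  exact pd_mul_comp_refl3 (fun y => u y j) (differentiable_pi.1 hu j) _ i x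

lemma Dsym_Tvec (u : (Fin 3 → ℝ) → (Fin 3 → ℝ)) (hu : Differentiable ℝ u) (x : Fin 3 → ℝ) :
    Dsym (Tvec u) x = Matrix.of fun i j => reflSign i * reflSign j * Dsym u (refl3 x) i j := by
  ext i j
  simp only [Dsym, Matrix.of_apply, pd_Tvec u hu]
  ring

/-- The Frobenius norm is invariant under conjugation by the reflection. -/
lemma frob_sign_conj (D : Matrix (Fin 3) (Fin 3) ℝ) :
    frob (Matrix.of fun i j => reflSign i * reflSign j * D i j) = frob D := by
  unfold frob
  congr 1
  refine Finset.sum_congr rfl fun i _ => Finset.sum_congr rfl fun j _ => ?_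
  calc (reflSign i * reflSign j * D i j) ^ 2
      = (reflSign i * reflSign i) * (reflSign j * reflSign j) * D i j ^ 2 := by ring
    _ = D i j ^ 2 := by rw [reflSign_sq, reflSign_sq]; ring

/-- let `S(D) = (ν₀ + ν₁|D|^{p−2})D` with `ν₀, ν₁ > 0`, `p > 2`.
If `(u, π)` solves pointwise the stationary non-Newtonian system
`−∇·S(𝒟u) + ∇π = f`, `∇·u = 0` on `ℝ³` (with the stated differentiability),
then `(𝒯u, 𝒯π)` solves the same system with force `𝒯f`. -/
theorem nonNewtonian_reflection_invariance (ν₀ ν₁ p : ℝ)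
    (hν₀ : 0 < ν₀) (hν₁ : 0 < ν₁) (hp : 2 < p)
    (S : Matrix (Fin 3) (Fin 3) ℝ → Matrix (Fin 3) (Fin 3) ℝ)
    (hS : S = fun D => (ν₀ + ν₁ * Real.rpow (frob D) (p - 2)) • D)
    (u f : (Fin 3 → ℝ) → (Fin 3 → ℝ)) (π : (Fin 3 → ℝ) → ℝ)
    (hu1 : Differentiable ℝ u)
    (hu2 : ∀ i j : Fin 3, Differentiable ℝ (fun x => pd i (fun y => u y j) x))
    (hπ : Differentiable ℝ π)
    (hSdiff : ∀ i j : Fin 3, Differentiable ℝ (fun x => S (Dsym u x) i j))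
    (heq : ∀ x : Fin 3 → ℝ, ∀ j : Fin 3,
      -(∑ i : Fin 3, pd i (fun y => S (Dsym u y) i j) x) + pd j π x = f x j)
    (hdiv : ∀ x : Fin 3 → ℝ, div3 u x = 0) :
    (∀ x : Fin 3 → ℝ, ∀ j : Fin 3,
      -(∑ i : Fin 3, pd i (fun y => S (Dsym (Tvec u) y) i j) x) + pd j (Tscal π) x
        = Tvec f x j) ∧
    (∀ x : Fin 3 → ℝ, div3 (Tvec u) x = 0) := by
  refine ⟨fun x j => ?_, fun x => ?_⟩
  · have hST : ∀ (y : Fin 3 → ℝ) (i j : Fin 3),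
        S (Dsym (Tvec u) y) i j = reflSign i * reflSign j * S (Dsym u (refl3 y)) i j := by
      intro y i j
      rw [Dsym_Tvec u hu1, hS]
      simp only [frob_sign_conj, Matrix.smul_apply, Matrix.of_apply, smul_eq_mul]
      ring
    have hpd : ∀ i : Fin 3, pd i (fun y => S (Dsym (Tvec u) y) i j) x
        = reflSign j * pd i (fun y => S (Dsym u y) i j) (refl3 x) := by
      intro i
      simp only [hST]
      rw [pd_mul_comp_refl3 (fun y => S (Dsym u y) i j) (hSdiff i j)]
      linear_combination
        reflSign j * pd i (fun y => S (Dsym u y) i j) (refl3 x) * reflSign_sq i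
    have hpi : pd j (Tscal π) x = reflSign j * pd j π (refl3 x) := by
      have h := pd_mul_comp_refl3 π hπ 1 j x
      simp only [one_mul] at h
      exact h
    simp only [hpd]
    rw [hpi, Tvec_apply, ← heq (refl3 x) j, ← Finset.mul_sum]
    ring
  · have h := hdiv (refl3 x)
    simp only [div3] at h ⊢
    simp only [pd_Tvec u hu1, ← mul_assoc, reflSign_sq, one_mul]
    exact h
end
end
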